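/- Let k₁, k₂, k₃, k₄ ∈ ℝ³ satisfy k₁ + k₂ + k₃ + k₄ = 0, and suppose k₁ + k₂ = s ŝ for some real s > 0 and unit vector ŝ ∈ ℝ³. Let n̂ be a unit vector not parallel to ŝ. Then the helicity sum Σ_{h ∈ {+1,−1}} h · conj(k₁·ê^{h}(ŝ)) · conj(k₂·ê^{h}(ŝ)) · (k₃·ê^{h}(ŝ)) · (k₄·ê^{h}(ŝ)) = i · [ŝ·(k₂×k₄)] · [ k₁·k₃ − (k₁·ŝ)(k₃·ŝ) ], as an identity in ℂ. -/

import Mathlib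

open scoped BigOperators

noncomputable section

/-- Euclidean dot product on ℝ³ (realised as `Fin 3 → ℝ`). -/
def dot3 (v w : Fin 3 → ℝ) : ℝ := ∑ i, v i * w i

/-- Cross product on ℝ³. -/
def cross3 (v w : Fin 3 → ℝ) : Fin 3 → ℝ :=
  ![v 1 * w 2 - v 2 * w 1, v 2 * w 0 - v 0 * w 2, v 0 * w 1 - v 1 * w 0]

/-- The complex polarisation vector
`ê^{h}(ŝ) = (n̂ − (n̂·ŝ)ŝ + h i ŝ×n̂)/√(2(1−(n̂·ŝ)²))` for helicity `h = ±1`. -/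
def polVec (h : ℝ) (s n : Fin 3 → ℝ) : Fin 3 → ℂ := fun i =>
  (((n i - dot3 n s * s i : ℝ) : ℂ) + (h : ℂ) * Complex.I * ((cross3 s n i : ℝ) : ℂ)) /
    ((Real.sqrt (2 * (1 - dot3 n s ^ 2)) : ℝ) : ℂ)

/-- The bilinear dot product of a real vector with a complex vector. -/
def dotRC (v : Fin 3 → ℝ) (z : Fin 3 → ℂ) : ℂ := ∑ i, (v i : ℂ) * z i

open scoped Matrix

/-!
Let `p` be the component of `n` orthogonal to `s`. The vectors `p` and `s ⨯₃ p` are orthogonal,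
of equal length, and span the plane orthogonal to `s`. Hence, for `h = ±1`,
`conj (k · ê^h) (l · ê^h) = (A + i h T) / 2`, where `A = k · l - (k · s) (l · s)` and
`T = s · (k × l)`.

Since `ê^h` is orthogonal to `s`, the relations `k₁ + k₂ ∈ ℝ s` and `k₃ + k₄ ∈ ℝ s` give
`k₂ · ê^h = -k₁ · ê^h` and `k₄ · ê^h = -k₃ · ê^h`. The helicity sum is therefore the difference of
squares `((A + i T) / 2) ^ 2 - ((A - i T) / 2) ^ 2 = i A T` taken at `k = k₁`, `l = k₃`.
-/

section CrossProduct

variable {R : Type*} [CommRing R] {s p : Fin 3 → R}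

lemma triple_product_eq_of_add_eq_smul {v v' w w' : Fin 3 → R} {a b : R}
    (hv : v + v' = a • s) (hw : w + w' = b • s) : s ⬝ᵥ v' ⨯₃ w' = s ⬝ᵥ v ⨯₃ w := by
  rw [eq_sub_of_add_eq' hv, eq_sub_of_add_eq' hw]
  simp only [map_sub, map_smul, LinearMap.sub_apply, LinearMap.smul_apply, cross_self,
    dotProduct_sub, dotProduct_smul, dotProduct_neg, dot_self_cross, dot_cross_self, smul_zero,
    neg_zero, zero_sub, neg_neg]

lemma cross_cross_self_of_dotProduct_eq_zero (hsp : s ⬝ᵥ p = 0) :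
    p ⨯₃ (s ⨯₃ p) = (p ⬝ᵥ p) • s := by
  rw [cross_cross_eq_smul_sub_smul', hsp, zero_smul, sub_zero]

lemma dotProduct_mul_dotProduct_cross_sub (hsp : s ⬝ᵥ p = 0) (k l : Fin 3 → R) :
    (k ⬝ᵥ p) * (l ⬝ᵥ s ⨯₃ p) - (k ⬝ᵥ s ⨯₃ p) * (l ⬝ᵥ p) = (p ⬝ᵥ p) * (s ⬝ᵥ k ⨯₃ l) := by
  rw [← cross_dot_cross, cross_cross_self_of_dotProduct_eq_zero hsp, dotProduct_smul,
    smul_eq_mul, dotProduct_comm _ s]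

-- The map `s ⨯₃ ·` is a quarter turn of the plane orthogonal to `s`, so this is
-- `dotProduct_mul_dotProduct_cross_sub` with `l` replaced by `s ⨯₃ l`.
lemma dotProduct_mul_dotProduct_add_cross (hs : s ⬝ᵥ s = 1) (hsp : s ⬝ᵥ p = 0)
    (k l : Fin 3 → R) :
    (k ⬝ᵥ p) * (l ⬝ᵥ p) + (k ⬝ᵥ s ⨯₃ p) * (l ⬝ᵥ s ⨯₃ p) =
      (p ⬝ᵥ p) * (k ⬝ᵥ l - (k ⬝ᵥ s) * (l ⬝ᵥ s)) := by
  have turn_dot_turn : s ⨯₃ l ⬝ᵥ s ⨯₃ p = l ⬝ᵥ p := by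
    rw [cross_dot_cross, hs, hsp, one_mul, zero_mul, sub_zero]
  have turn_dot : s ⨯₃ l ⬝ᵥ p = -(l ⬝ᵥ s ⨯₃ p) := by
    rw [dotProduct_comm, triple_product_permutation, triple_product_permutation,
      ← cross_anticomm, dotProduct_neg]
  have triple : s ⬝ᵥ k ⨯₃ (s ⨯₃ l) = k ⬝ᵥ l - (k ⬝ᵥ s) * (l ⬝ᵥ s) := by
    rw [cross_cross_eq_smul_sub_smul', dotProduct_sub, dotProduct_smul, dotProduct_smul, hs,
      dotProduct_comm s l, dotProduct_comm s k, smul_eq_mul, smul_eq_mul, mul_one]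
  have quarter_turn := dotProduct_mul_dotProduct_cross_sub hsp k (s ⨯₃ l)
  rwa [turn_dot_turn, turn_dot, triple, mul_neg, sub_neg_eq_add] at quarter_turn

end CrossProduct

/-- The component of `v` orthogonal to `s`, which for `v = n` is the real part of the unnormalised
polarisation vector. The formula is the orthogonal projection only when `s ⬝ᵥ s = 1`. -/
def transverse {ι R : Type*} [Fintype ι] [CommRing R] (s v : ι → R) : ι → R :=
  v - (v ⬝ᵥ s) • s

section Transverse

variable {ι R : Type*} [Fintype ι] [CommRing R] {s : ι → R}

lemma dotProduct_transverse_self (hs : s ⬝ᵥ s = 1) (v : ι → R) : s ⬝ᵥ transverse s v = 0 := by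
  rw [transverse, dotProduct_sub, dotProduct_smul, hs, dotProduct_comm, smul_eq_mul, mul_one,
    sub_self]

lemma transverse_dotProduct_transverse (hs : s ⬝ᵥ s = 1) (v w : ι → R) :
    transverse s v ⬝ᵥ transverse s w = v ⬝ᵥ w - (v ⬝ᵥ s) * (w ⬝ᵥ s) := by
  nth_rw 1 [transverse]
  rw [sub_dotProduct, smul_dotProduct, dotProduct_transverse_self hs, smul_zero, sub_zero,
    transverse, dotProduct_sub, dotProduct_smul, smul_eq_mul, mul_comm]

lemma cross_transverse (s v : Fin 3 → R) : s ⨯₃ transverse s v = s ⨯₃ v := by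
  rw [transverse, map_sub, map_smul, cross_self, smul_zero, sub_zero]

lemma transverse_dotProduct_self_pos [LinearOrder R] [IsStrictOrderedRing R] {v : ι → R}
    (hpar : ¬ ∃ c : R, v = c • s) : 0 < transverse s v ⬝ᵥ transverse s v := by
  have transverse_ne_zero : transverse s v ≠ 0 := fun h => hpar ⟨v ⬝ᵥ s, sub_eq_zero.mp h⟩
  exact (Finset.sum_nonneg fun _ _ => mul_self_nonneg _).lt_of_ne'
    (dotProduct_self_eq_zero.not.mpr transverse_ne_zero)

end Transverse

section Polarisation

lemma dot3_eq_dotProduct (v w : Fin 3 → ℝ) : dot3 v w = v ⬝ᵥ w := rfl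

lemma cross3_eq_crossProduct (v w : Fin 3 → ℝ) : cross3 v w = v ⨯₃ w := rfl

lemma dotRC_polVec (h : ℝ) (k s n : Fin 3 → ℝ) :
    dotRC k (polVec h s n) =
      ((k ⬝ᵥ transverse s n : ℝ) + h * Complex.I * (k ⬝ᵥ s ⨯₃ n : ℝ)) /
        (√(2 * (1 - (n ⬝ᵥ s) ^ 2)) : ℝ) := by
  simp only [dotRC, polVec, dot3_eq_dotProduct, cross3_eq_crossProduct, mul_div_assoc',
    ← Finset.sum_div, mul_add, Finset.sum_add_distrib, dotProduct, transverse, Pi.sub_apply,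
    Pi.smul_apply, smul_eq_mul, Complex.ofReal_sum, Complex.ofReal_mul, Finset.mul_sum,
    mul_left_comm]

lemma conj_add_mul_I_mul_add_mul_I {h : ℝ} (hh : h ^ 2 = 1) (a b c d : ℝ) :
    starRingEnd ℂ (a + h * Complex.I * b) * (c + h * Complex.I * d) =
      (a * c + b * d : ℝ) + h * Complex.I * (a * d - b * c : ℝ) := by
  have hh' : (h : ℂ) ^ 2 = 1 := by exact_mod_cast hh
  simp only [map_add, map_mul, Complex.conj_ofReal, Complex.conj_I]
  push_cast
  linear_combination (b * d : ℂ) * hh' - (h ^ 2 * b * d : ℂ) * Complex.I_sq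

variable {s n : Fin 3 → ℝ}

lemma conj_dotRC_polVec_mul_dotRC_polVec {h : ℝ} (hh : h ^ 2 = 1) (hs : s ⬝ᵥ s = 1)
    (hn : n ⬝ᵥ n = 1) (hpar : ¬ ∃ c : ℝ, n = c • s) (k l : Fin 3 → ℝ) :
    starRingEnd ℂ (dotRC k (polVec h s n)) * dotRC l (polVec h s n) =
      ((k ⬝ᵥ l - (k ⬝ᵥ s) * (l ⬝ᵥ s) : ℝ) + h * Complex.I * (s ⬝ᵥ k ⨯₃ l : ℝ)) / 2 := by
  have orthogonal : s ⬝ᵥ transverse s n = 0 := dotProduct_transverse_self hs n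
  have symmetric_part := dotProduct_mul_dotProduct_add_cross hs orthogonal k l
  have alternating_part := dotProduct_mul_dotProduct_cross_sub orthogonal k l
  rw [cross_transverse] at symmetric_part alternating_part
  have norm_sq : 1 - (n ⬝ᵥ s) ^ 2 = transverse s n ⬝ᵥ transverse s n := by
    rw [transverse_dotProduct_transverse hs, hn, sq]
  have norm_sq_pos := transverse_dotProduct_self_pos hpar
  have sqrt_mul_self : √(2 * (1 - (n ⬝ᵥ s) ^ 2)) * √(2 * (1 - (n ⬝ᵥ s) ^ 2)) =
      2 * (transverse s n ⬝ᵥ transverse s n) := by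
    rw [norm_sq, Real.mul_self_sqrt (by positivity)]
  have norm_sq_ne_zero : ((transverse s n ⬝ᵥ transverse s n : ℝ) : ℂ) ≠ 0 :=
    Complex.ofReal_ne_zero.mpr norm_sq_pos.ne'
  rw [dotRC_polVec, dotRC_polVec, map_div₀, Complex.conj_ofReal, div_mul_div_comm,
    conj_add_mul_I_mul_add_mul_I hh, ← Complex.ofReal_mul, sqrt_mul_self, symmetric_part,
    alternating_part]
  push_cast
  field_simp

lemma dotRC_polVec_eq_neg_of_add_eq_smul (h : ℝ) (hs : s ⬝ᵥ s = 1) {k l : Fin 3 → ℝ} {a : ℝ}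
    (hkl : k + l = a • s) : dotRC l (polVec h s n) = -dotRC k (polVec h s n) := by
  rw [dotRC_polVec, dotRC_polVec, eq_sub_of_add_eq' hkl, sub_dotProduct, sub_dotProduct,
    smul_dotProduct, smul_dotProduct, dotProduct_transverse_self hs, dot_self_cross, smul_zero,
    zero_sub, zero_sub]
  push_cast
  ring

theorem polVec_helicity_sum_general {k₁ k₂ k₃ k₄ : Fin 3 → ℝ} {a b : ℝ} (hs : dot3 s s = 1)
    (h₁₂ : k₁ + k₂ = a • s) (h₃₄ : k₃ + k₄ = b • s)
    (hn : dot3 n n = 1) (hpar : ¬ ∃ c : ℝ, n = c • s) :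
    (1 : ℂ) * (starRingEnd ℂ (dotRC k₁ (polVec 1 s n)) *
        starRingEnd ℂ (dotRC k₂ (polVec 1 s n)) *
        dotRC k₃ (polVec 1 s n) * dotRC k₄ (polVec 1 s n))
      + (-1 : ℂ) * (starRingEnd ℂ (dotRC k₁ (polVec (-1) s n)) *
        starRingEnd ℂ (dotRC k₂ (polVec (-1) s n)) *
        dotRC k₃ (polVec (-1) s n) * dotRC k₄ (polVec (-1) s n))
      = Complex.I * ((dot3 s (cross3 k₂ k₄) : ℝ) : ℂ) *
          ((dot3 k₁ k₃ - dot3 k₁ s * dot3 k₃ s : ℝ) : ℂ) := by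
  rw [dot3_eq_dotProduct] at hs hn
  have summand {h : ℝ} (hh : h ^ 2 = 1) :
      starRingEnd ℂ (dotRC k₁ (polVec h s n)) * starRingEnd ℂ (dotRC k₂ (polVec h s n)) *
          dotRC k₃ (polVec h s n) * dotRC k₄ (polVec h s n) =
        (((k₁ ⬝ᵥ k₃ - (k₁ ⬝ᵥ s) * (k₃ ⬝ᵥ s) : ℝ) +
          h * Complex.I * (s ⬝ᵥ k₁ ⨯₃ k₃ : ℝ)) / 2) ^ 2 := by
    rw [dotRC_polVec_eq_neg_of_add_eq_smul h hs h₁₂, dotRC_polVec_eq_neg_of_add_eq_smul h hs h₃₄,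
      ← conj_dotRC_polVec_mul_dotRC_polVec hh hs hn hpar, map_neg]
    ring
  simp only [dot3_eq_dotProduct, cross3_eq_crossProduct]
  rw [summand (one_pow 2), summand neg_one_sq, triple_product_eq_of_add_eq_smul h₁₂ h₃₄]
  push_cast
  ring

end Polarisation

/-- The polarisation sum identity:
`Σ_{h=±1} h conj(k₁·ê^h(ŝ)) conj(k₂·ê^h(ŝ)) (k₃·ê^h(ŝ)) (k₄·ê^h(ŝ))
  = i [ŝ·(k₂×k₄)] [k₁·k₃ − (k₁·ŝ)(k₃·ŝ)]`. -/
theorem polVec_helicity_sum (k₁ k₂ k₃ k₄ : Fin 3 → ℝ)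
    (hsum : k₁ + k₂ + k₃ + k₄ = 0)
    (s : ℝ) (shat : Fin 3 → ℝ) (hs : 0 < s) (hshat : dot3 shat shat = 1)
    (heq : k₁ + k₂ = s • shat)
    (n : Fin 3 → ℝ) (hn : dot3 n n = 1) (hpar : ¬ ∃ c : ℝ, n = c • shat) :
    (1 : ℂ) * (starRingEnd ℂ (dotRC k₁ (polVec 1 shat n)) *
        starRingEnd ℂ (dotRC k₂ (polVec 1 shat n)) *
        dotRC k₃ (polVec 1 shat n) * dotRC k₄ (polVec 1 shat n))
      + (-1 : ℂ) * (starRingEnd ℂ (dotRC k₁ (polVec (-1) shat n)) *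
        starRingEnd ℂ (dotRC k₂ (polVec (-1) shat n)) *
        dotRC k₃ (polVec (-1) shat n) * dotRC k₄ (polVec (-1) shat n))
      = Complex.I * ((dot3 shat (cross3 k₂ k₄) : ℝ) : ℂ) *
          ((dot3 k₁ k₃ - dot3 k₁ shat * dot3 k₃ shat : ℝ) : ℂ) := by
  refine polVec_helicity_sum_general hshat heq (b := -s) ?_ hn hpar
  rw [neg_smul, ← heq, eq_neg_iff_add_eq_zero, ← hsum]; abel

end
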